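/- Skew-orthogonality of the spherical skew-orthogonal polynomials (content of Lemma 3.1 and equation (3.8)). Let N ≥ 1 and n ≥ N be integers and L ≥ 0 a real number. Define q_{2k+1}(ζ) := ζ^{2k+1} and q_{2k}(ζ) := (Γ(k+L+1)/Γ(k−n+1/2)) ∑_{l=0}^{k} (−1)^{k−l} (Γ(l−n+1/2)/Γ(l+L+1)) ζ^{2l}. Then for all integers 0 ≤ k, l ≤ N−1: ⟨q_{2k}, q_{2l}⟩_s = 0, ⟨q_{2k+1}, q_{2l+1}⟩_s = 0, and ⟨q_{2k}, q_{2l+1}⟩_s = δ_{k,l} · 2·Γ(2k+2L+2)·Γ(2n−2k)/Γ(2n+2L+2), where δ_{k,l} is the Kronecker delta. -/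

import Mathlib

open MeasureTheory Filter Finset

noncomputable section

namespace SI

/-- The weight `w(ζ) = |ζ|^{4L}(1+|ζ|²)^{-2(n+L+1)}`. -/
def wfun (n L : ℝ) (ζ : ℂ) : ℝ :=
  ‖ζ‖ ^ (4*L) * (1 + ‖ζ‖ ^ 2) ^ (-(2*(n+L+1)))

/-- The skew-symmetric form `⟨f,g⟩_s` (the factor `π⁻¹` accounts for `dA = d²ζ/π`). -/
def skewForm (n L : ℝ) (f g : ℂ → ℂ) : ℂ :=
  (Real.pi : ℂ)⁻¹ * ∫ ζ : ℂ,
    (f ζ * g ((starRingEnd ℂ) ζ) - g ζ * f ((starRingEnd ℂ) ζ)) *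
      (ζ - (starRingEnd ℂ) ζ) * ((wfun n L ζ : ℝ) : ℂ)

/-- The odd skew-orthogonal polynomial `q_{2k+1}(ζ) = ζ^{2k+1}`. -/
def qodd (k : ℕ) (ζ : ℂ) : ℂ := ζ ^ (2*k+1)

/-- The even skew-orthogonal polynomial `q_{2k}`. -/
def qeven (n L : ℝ) (k : ℕ) (ζ : ℂ) : ℂ :=
  (Complex.Gamma ((k+L+1 : ℝ) : ℂ) / Complex.Gamma ((k-n+1/2 : ℝ) : ℂ)) *
    ∑ l ∈ range (k+1), (-1:ℂ)^(k-l) *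
      (Complex.Gamma ((l-n+1/2 : ℝ) : ℂ) / Complex.Gamma ((l+L+1 : ℝ) : ℂ)) * ζ ^ (2*l)

/-- Angular integral. -/
lemma angular (m : ℤ) :
    ∫ θ in Set.Ioo (-Real.pi) Real.pi, Complex.exp (m * Complex.I * θ) =
      if m = 0 then 2 * (Real.pi : ℂ) else 0 := by
  rw [← integral_Ioc_eq_integral_Ioo,
    ← intervalIntegral.integral_of_le (by linarith [Real.pi_pos])]
  split_ifs with h
  · subst h
    simp
    ring
  · have hc : (m : ℂ) * Complex.I ≠ 0 := mul_ne_zero (by exact_mod_cast h) Complex.I_ne_zero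
    rw [integral_exp_mul_complex hc]
    have : Complex.exp (m * Complex.I * (Real.pi : ℂ)) =
        Complex.exp (m * Complex.I * ((-Real.pi : ℝ) : ℂ)) := by
      rw [Complex.exp_eq_exp_iff_exists_int]
      refine ⟨m, ?_⟩
      push_cast
      ring
    rw [this, sub_self, zero_div]

/-- Real beta integral in Gamma form on the open unit interval. -/
lemma beta_Ioo (u v : ℝ) (hu : 0 < u) (hv : 0 < v) :
    ∫ x in Set.Ioo (0:ℝ) 1, x ^ (u - 1) * (1 - x) ^ (v - 1) =
      Real.Gamma u * Real.Gamma v / Real.Gamma (u + v) := by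
  have h := Complex.betaIntegral_eq_Gamma_mul_div (u : ℂ) (v : ℂ) (by simpa) (by simpa)
  rw [Complex.betaIntegral, intervalIntegral.integral_of_le zero_le_one,
    integral_Ioc_eq_integral_Ioo] at h
  have h2 : ∫ x in Set.Ioo (0:ℝ) 1, (x : ℂ) ^ ((u:ℂ) - 1) * (1 - (x : ℂ)) ^ ((v:ℂ) - 1) =
      ∫ x in Set.Ioo (0:ℝ) 1, ((x ^ (u - 1) * (1 - x) ^ (v - 1) : ℝ) : ℂ) := by
    refine setIntegral_congr_fun measurableSet_Ioo fun x hx => ?_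
    rw [Complex.ofReal_mul, Complex.ofReal_cpow hx.1.le,
      Complex.ofReal_cpow (by linarith [hx.2])]
    push_cast
    rfl
  rw [h2, integral_complex_ofReal, ← Complex.ofReal_add, Complex.Gamma_ofReal,
    Complex.Gamma_ofReal, Complex.Gamma_ofReal] at h
  exact_mod_cast h

lemma image_sub : (fun r : ℝ => r ^ 2 / (1 + r ^ 2)) '' Set.Ioi 0 = Set.Ioo 0 1 := by
  ext x
  constructor
  · rintro ⟨r, hr, rfl⟩
    have hr' : 0 < r := hr
    refine ⟨by positivity, ?_⟩
    simp only
    rw [div_lt_one (by positivity)]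
    linarith
  · rintro ⟨h0, h1⟩
    have h2 : 0 < 1 - x := by linarith
    refine ⟨Real.sqrt (x / (1 - x)), Real.sqrt_pos.2 (by positivity), ?_⟩
    simp only
    rw [Real.sq_sqrt (by positivity)]
    field_simp
    ring

/-- Radial integral. -/
lemma radial (n a : ℕ) (L : ℝ) (hL : 0 ≤ L) (ha : a ≤ 2 * n) :
    ∫ r in Set.Ioi (0:ℝ), 2 * (r * (r ^ (2 * a) * (r ^ (4 * L) *
      (1 + r ^ 2) ^ (-(2 * ((n:ℝ) + L + 1)))))) =
      Real.Gamma (a + 2 * L + 1) * Real.Gamma (2 * n - a + 1) /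
        Real.Gamma (2 * n + 2 * L + 2) := by
  have hA : (a : ℝ) ≤ 2 * n := by exact_mod_cast ha
  have h := beta_Ioo (a + 2 * L + 1) (2 * n - a + 1) (by positivity) (by linarith)
  rw [show (a + 2 * L + 1 : ℝ) + (2 * n - a + 1) = 2 * n + 2 * L + 2 by ring] at h
  rw [← h, ← image_sub, integral_image_eq_integral_abs_deriv_smul
    (f' := fun r => 2 * r / (1 + r ^ 2) ^ 2) measurableSet_Ioi]
  · refine setIntegral_congr_fun measurableSet_Ioi fun r hr => ?_
    have hr' : 0 < r := hr
    have hp : 0 < 1 + r ^ 2 := by positivity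
    simp only [smul_eq_mul]
    rw [abs_of_pos (by positivity)]
    have e1 : 1 - r ^ 2 / (1 + r ^ 2) = (1 + r ^ 2)⁻¹ := by
      field_simp
      ring
    rw [e1, Real.div_rpow (by positivity) hp.le, Real.inv_rpow hp.le, ← Real.rpow_neg hp.le,
      ← Real.rpow_natCast r 2, ← Real.rpow_mul hr'.le]
    rw [Real.rpow_natCast r 2]
    rw [div_eq_mul_inv (r ^ _), ← Real.rpow_neg hp.le, div_eq_mul_inv,
      ← Real.rpow_natCast (1 + r ^ 2) 2, ← Real.rpow_neg hp.le]
    rw [← Real.rpow_natCast r (2 * a)]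
    have e2 : -(2 * ((n:ℝ) + L + 1)) = -((2:ℕ):ℝ) + (-((a:ℝ) + 2 * L + 1 - 1)
        + -(2 * n - a + 1 - 1)) := by
      push_cast
      ring
    have e3 : ((2:ℕ):ℝ) * ((a:ℝ) + 2 * L + 1 - 1) = ((2 * a : ℕ) : ℝ) + 4 * L := by
      push_cast
      ring
    rw [e2, Real.rpow_add hp, Real.rpow_add hp, e3, Real.rpow_add hr']
    ring
  · intro r hr
    have hp : 1 + r ^ 2 ≠ 0 := by positivity
    have h1 : HasDerivAt (fun r : ℝ => r ^ 2) (2 * r) r := by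
      simpa using hasDerivAt_pow 2 r
    have h2 := h1.div (h1.const_add 1) hp
    refine (h2.congr_deriv ?_).hasDerivWithinAt
    ring
  · intro x hx y hy hxy
    have hx' : 0 < x := hx
    have hy' : 0 < y := hy
    simp only at hxy
    rw [div_eq_div_iff (by positivity) (by positivity)] at hxy
    have : x ^ 2 = y ^ 2 := by linarith
    exact (pow_left_inj₀ hx'.le hy'.le two_ne_zero).1 this

lemma wfun_measurable (n L : ℝ) : Measurable (wfun n L) := by
  unfold wfun
  fun_prop

lemma wfun_nonneg (n L : ℝ) (ζ : ℂ) : 0 ≤ wfun n L ζ := by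
  unfold wfun
  positivity

/-- Integrability of the moments. -/
lemma mom_integrable (n a b : ℕ) (L : ℝ) (hL : 0 ≤ L) (hab : a + b ≤ 4 * n) :
    Integrable (fun ζ : ℂ => ζ ^ a * (starRingEnd ℂ ζ) ^ b * ((wfun n L ζ : ℝ) : ℂ)) := by
  have hi : Integrable (fun x : ℂ => ((1 : ℝ) + ‖x‖ ^ 2) ^ (-(3:ℝ) / 2)) :=
    integrable_rpow_neg_one_add_norm_sq (by simp [Complex.finrank_real_complex]; norm_num)
  refine hi.mono' ?_ (Eventually.of_forall fun ζ => ?_)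
  · have hw := wfun_measurable n L
    refine Measurable.aestronglyMeasurable ?_
    have : Measurable (fun ζ : ℂ => starRingEnd ℂ ζ) := Complex.continuous_conj.measurable
    fun_prop
  · have hp : (1:ℝ) ≤ 1 + ‖ζ‖ ^ 2 := by
      have := sq_nonneg ‖ζ‖
      linarith
    have hp0 : (0:ℝ) < 1 + ‖ζ‖ ^ 2 := by linarith
    rw [norm_mul, norm_mul, norm_pow, norm_pow, RCLike.norm_conj, Complex.norm_real,
      Real.norm_of_nonneg (wfun_nonneg _ _ _), wfun, ← pow_add]
    have hz : ‖ζ‖ ≤ (1 + ‖ζ‖ ^ 2) ^ ((1:ℝ) / 2) := by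
      rw [← Real.sqrt_eq_rpow]
      exact Real.le_sqrt_of_sq_le (by linarith)
    have h1 : ‖ζ‖ ^ (a + b) ≤ (1 + ‖ζ‖ ^ 2) ^ (((a + b : ℕ) : ℝ) / 2) := by
      calc ‖ζ‖ ^ (a + b) ≤ ((1 + ‖ζ‖ ^ 2) ^ ((1:ℝ) / 2)) ^ (a + b) := by gcongr
        _ = _ := by
          rw [← Real.rpow_natCast, ← Real.rpow_mul hp0.le]
          congr 1
          ring
    have h2 : ‖ζ‖ ^ (4 * L) ≤ (1 + ‖ζ‖ ^ 2) ^ (2 * L) := by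
      calc ‖ζ‖ ^ (4 * L) ≤ ((1 + ‖ζ‖ ^ 2) ^ ((1:ℝ) / 2)) ^ (4 * L) :=
            Real.rpow_le_rpow (norm_nonneg _) hz (by positivity)
        _ = _ := by
          rw [← Real.rpow_mul hp0.le]
          congr 1
          ring
    calc _ ≤ (1 + ‖ζ‖ ^ 2) ^ (((a + b : ℕ) : ℝ) / 2) * ((1 + ‖ζ‖ ^ 2) ^ (2 * L) *
          (1 + ‖ζ‖ ^ 2) ^ (-(2*((n:ℝ)+L+1)))) := by gcongr
      _ = (1 + ‖ζ‖ ^ 2) ^ (((a + b : ℕ) : ℝ) / 2 + (2 * L + -(2*((n:ℝ)+L+1)))) := by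
          rw [← Real.rpow_add hp0, ← Real.rpow_add hp0]
      _ ≤ _ := by
          refine Real.rpow_le_rpow_of_exponent_le hp ?_
          have : ((a + b : ℕ) : ℝ) ≤ 4 * n := by exact_mod_cast hab
          linarith

/-- The diagonal moment. -/
def hmom (n : ℕ) (L : ℝ) (a : ℕ) : ℝ :=
  Real.Gamma (a + 2 * L + 1) * Real.Gamma (2 * n - a + 1) / Real.Gamma (2 * n + 2 * L + 2)

lemma mom_eq (n a b : ℕ) (L : ℝ) (hL : 0 ≤ L) (ha : a ≤ 2 * n) :
    ∫ ζ : ℂ, ζ ^ a * (starRingEnd ℂ ζ) ^ b * ((wfun n L ζ : ℝ) : ℂ) =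
      Real.pi * (if a = b then (hmom n L a : ℂ) else 0) := by
  rw [← Complex.integral_comp_polarCoord_symm]
  have h1 : ∀ p ∈ polarCoord.target, (p.1 • ((Complex.polarCoord.symm p) ^ a *
      (starRingEnd ℂ (Complex.polarCoord.symm p)) ^ b *
      ((wfun n L (Complex.polarCoord.symm p) : ℝ) : ℂ))) =
      ((p.1 * (p.1 ^ (a + b) * (p.1 ^ (4 * L) *
      (1 + p.1 ^ 2) ^ (-(2 * ((n:ℝ) + L + 1))))) : ℝ) : ℂ) *
      Complex.exp (((a - b : ℤ) : ℂ) * Complex.I * p.2) := by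
    rintro ⟨r, θ⟩ ⟨hr, hθ⟩
    have hr' : 0 < r := hr
    have hz : Complex.polarCoord.symm (r, θ) = r * Complex.exp (θ * Complex.I) := by
      rw [Complex.polarCoord_symm_apply, Complex.exp_mul_I]
      simp
    have hc : starRingEnd ℂ (r * Complex.exp (θ * Complex.I)) =
        r * Complex.exp (-(θ * Complex.I)) := by
      rw [map_mul, ← Complex.exp_conj]
      simp
    have hnorm : ‖(r : ℂ) * Complex.exp (θ * Complex.I)‖ = r := by
      rw [norm_mul, Complex.norm_exp_ofReal_mul_I, Complex.norm_real, Real.norm_of_nonneg hr'.le,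
        mul_one]
    have he : Complex.exp (((a - b : ℤ) : ℂ) * Complex.I * θ) =
        Complex.exp (θ * Complex.I) ^ a * Complex.exp (-(θ * Complex.I)) ^ b := by
      rw [← Complex.exp_nat_mul, ← Complex.exp_nat_mul, ← Complex.exp_add]
      congr 1
      push_cast
      ring
    simp only
    rw [hz, hc, wfun, hnorm, he, Complex.real_smul]
    push_cast
    ring
  have hm : MeasurableSet polarCoord.target := polarCoord.open_target.measurableSet
  rw [setIntegral_congr_fun hm h1, polarCoord_target, Measure.volume_eq_prod,
    setIntegral_prod_mul (fun r : ℝ => ((r * (r ^ (a + b) * (r ^ (4 * L) *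
      (1 + r ^ 2) ^ (-(2 * ((n:ℝ) + L + 1))))) : ℝ) : ℂ))
      (fun θ : ℝ => Complex.exp (((a - b : ℤ) : ℂ) * Complex.I * θ)), angular]
  by_cases hab : a = b
  · subst hab
    have h2 := radial n a L hL ha
    rw [integral_const_mul] at h2
    rw [integral_complex_ofReal, ← two_mul]
    simp only [sub_self, if_true, hmom]
    rw [← h2]
    push_cast
    ring
  · have : (a - b : ℤ) ≠ 0 := by omega
    simp [this, hab]

/-- The integrand of the form on monomials. -/
lemma mono_integrable (n a b : ℕ) (L : ℝ) (hL : 0 ≤ L) (hab : a + b + 1 ≤ 4 * n) :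
    Integrable (fun ζ : ℂ => (ζ ^ a * (starRingEnd ℂ ζ) ^ b - ζ ^ b * (starRingEnd ℂ ζ) ^ a) *
      (ζ - starRingEnd ℂ ζ) * ((wfun n L ζ : ℝ) : ℂ)) := by
  have h := ((mom_integrable n (a+1) b L hL (by omega)).sub
    (mom_integrable n a (b+1) L hL (by omega))).sub
    ((mom_integrable n (b+1) a L hL (by omega)).sub
    (mom_integrable n b (a+1) L hL (by omega)))
  refine h.congr (Eventually.of_forall fun ζ => ?_)
  simp only [Pi.sub_apply]
  ring

lemma mono_eq (n a b : ℕ) (L : ℝ) (hL : 0 ≤ L) (ha : a + 1 ≤ 2 * n) (hb : b + 1 ≤ 2 * n) :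
    (Real.pi : ℂ)⁻¹ * ∫ ζ : ℂ,
      (ζ ^ a * (starRingEnd ℂ ζ) ^ b - ζ ^ b * (starRingEnd ℂ ζ) ^ a) *
      (ζ - starRingEnd ℂ ζ) * ((wfun n L ζ : ℝ) : ℂ) =
      2 * (if a + 1 = b then (hmom n L b : ℂ) else 0) -
      2 * (if a = b + 1 then (hmom n L a : ℂ) else 0) := by
  have i1 := mom_integrable n (a+1) b L hL (by omega)
  have i2 := mom_integrable n a (b+1) L hL (by omega)
  have i3 := mom_integrable n (b+1) a L hL (by omega)
  have i4 := mom_integrable n b (a+1) L hL (by omega)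
  have e : ∀ ζ : ℂ, (ζ ^ a * (starRingEnd ℂ ζ) ^ b - ζ ^ b * (starRingEnd ℂ ζ) ^ a) *
      (ζ - starRingEnd ℂ ζ) * ((wfun n L ζ : ℝ) : ℂ) =
      (ζ ^ (a+1) * (starRingEnd ℂ ζ) ^ b * ((wfun n L ζ : ℝ) : ℂ) -
       ζ ^ a * (starRingEnd ℂ ζ) ^ (b+1) * ((wfun n L ζ : ℝ) : ℂ)) -
      (ζ ^ (b+1) * (starRingEnd ℂ ζ) ^ a * ((wfun n L ζ : ℝ) : ℂ) -
       ζ ^ b * (starRingEnd ℂ ζ) ^ (a+1) * ((wfun n L ζ : ℝ) : ℂ)) := fun ζ => by ring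
  simp_rw [e]
  have i12 := i1.sub i2
  have i34 := i3.sub i4
  simp only [Pi.sub_def] at i12 i34
  rw [integral_sub i12 i34, integral_sub i1 i2, integral_sub i3 i4,
    mom_eq n _ _ L hL ha, mom_eq n _ _ L hL (by omega), mom_eq n _ _ L hL hb,
    mom_eq n _ _ L hL (by omega)]
  have hpi : (Real.pi : ℂ) ≠ 0 := by exact_mod_cast Real.pi_ne_zero
  rcases eq_or_ne (a + 1) b with h | h
  · subst h
    have h1 : a ≠ a + 1 + 1 := by omega
    simp only [h1, h1.symm, if_true, if_false]
    field_simp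
    ring
  · rcases eq_or_ne a (b + 1) with h2 | h2
    · subst h2
      have h1 : b ≠ b + 1 + 1 := by omega
      simp only [h1, h1.symm, if_true, if_false]
      field_simp
      ring
    · simp [h2.symm, h2, h, h.symm]

/-- Bilinear expansion. -/
lemma skew_sum (n : ℕ) (L : ℝ) (hL : 0 ≤ L) (s t : Finset ℕ) (u v : ℕ → ℂ) (p q : ℕ → ℕ)
    (hp : ∀ i ∈ s, p i + 1 ≤ 2 * n) (hq : ∀ j ∈ t, q j + 1 ≤ 2 * n) :
    skewForm n L (fun ζ => ∑ i ∈ s, u i * ζ ^ p i) (fun ζ => ∑ j ∈ t, v j * ζ ^ q j) =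
      ∑ i ∈ s, ∑ j ∈ t, u i * v j *
        (2 * (if p i + 1 = q j then (hmom n L (q j) : ℂ) else 0) -
         2 * (if p i = q j + 1 then (hmom n L (p i) : ℂ) else 0)) := by
  have e : ∀ ζ : ℂ, ((∑ i ∈ s, u i * ζ ^ p i) * (∑ j ∈ t, v j * (starRingEnd ℂ ζ) ^ q j) -
      (∑ j ∈ t, v j * ζ ^ q j) * (∑ i ∈ s, u i * (starRingEnd ℂ ζ) ^ p i)) *
      (ζ - starRingEnd ℂ ζ) * ((wfun n L ζ : ℝ) : ℂ) =
      ∑ i ∈ s, ∑ j ∈ t, u i * v j *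
        ((ζ ^ p i * (starRingEnd ℂ ζ) ^ q j - ζ ^ q j * (starRingEnd ℂ ζ) ^ p i) *
        (ζ - starRingEnd ℂ ζ) * ((wfun n L ζ : ℝ) : ℂ)) := by
    intro ζ
    rw [mul_comm (∑ j ∈ t, v j * ζ ^ q j), sum_mul_sum, sum_mul_sum, ← sum_sub_distrib,
      sum_mul, sum_mul]
    refine sum_congr rfl fun i _ => ?_
    rw [← sum_sub_distrib, sum_mul, sum_mul]
    refine sum_congr rfl fun j _ => ?_
    ring
  have hint : ∀ i ∈ s, ∀ j ∈ t, Integrable (fun ζ : ℂ => u i * v j *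
        ((ζ ^ p i * (starRingEnd ℂ ζ) ^ q j - ζ ^ q j * (starRingEnd ℂ ζ) ^ p i) *
        (ζ - starRingEnd ℂ ζ) * ((wfun n L ζ : ℝ) : ℂ))) := fun i hi j hj =>
    (mono_integrable n _ _ L hL (by have := hp i hi; have := hq j hj; omega)).const_mul _
  unfold skewForm
  simp_rw [e]
  rw [integral_finsetSum _ (fun i hi => integrable_finsetSum _ (hint i hi)), mul_sum]
  refine sum_congr rfl fun i hi => ?_
  rw [integral_finsetSum _ (hint i hi), mul_sum]
  refine sum_congr rfl fun j hj => ?_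
  rw [integral_const_mul, ← mono_eq n _ _ L hL (hp i hi) (hq j hj)]
  ring

/-- Coefficients of the even polynomial. -/
def cf (n L : ℝ) (k l : ℕ) : ℂ :=
  (Complex.Gamma ((k+L+1 : ℝ) : ℂ) / Complex.Gamma ((k-n+1/2 : ℝ) : ℂ)) * ((-1:ℂ)^(k-l) *
      (Complex.Gamma ((l-n+1/2 : ℝ) : ℂ) / Complex.Gamma ((l+L+1 : ℝ) : ℂ)))

lemma qeven_eq (n L : ℝ) (k : ℕ) :
    qeven n L k = fun ζ => ∑ l ∈ range (k+1), cf n L k l * ζ ^ (2*l) := by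
  funext ζ
  simp only [qeven, cf, mul_sum, mul_assoc]

lemma qodd_eq (k : ℕ) :
    qodd k = fun ζ => ∑ l ∈ ({k} : Finset ℕ), (fun _ => (1:ℂ)) l * ζ ^ (2*l+1) := by
  funext ζ
  simp [qodd]

lemma half_ne (k n m : ℕ) : (k - n + 1/2 : ℝ) ≠ -m := by
  intro h
  have h1 : (2 * k + 1 + 2 * m : ℝ) = 2 * n := by linarith
  have h2 : 2 * k + 1 + 2 * m = 2 * n := by exact_mod_cast h1
  omega

lemma cf_self (n k : ℕ) (L : ℝ) (hL : 0 ≤ L) : cf n L k k = 1 := by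
  have h1 : Real.Gamma (k - n + 1/2 : ℝ) ≠ 0 := Real.Gamma_ne_zero (half_ne k n)
  have h2 : Real.Gamma (k + L + 1 : ℝ) ≠ 0 := (Real.Gamma_pos_of_pos (by positivity)).ne'
  have h1' : Complex.Gamma ((k - n + 1/2 : ℝ) : ℂ) ≠ 0 := by
    rw [Complex.Gamma_ofReal]
    exact_mod_cast h1
  have h2' : Complex.Gamma ((k + L + 1 : ℝ) : ℂ) ≠ 0 := by
    rw [Complex.Gamma_ofReal]
    exact_mod_cast h2
  unfold cf
  rw [Nat.sub_self, pow_zero, one_mul, div_mul_div_comm, mul_comm, div_self (mul_ne_zero h1' h2')]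

lemma cf_rec (n k l : ℕ) (L : ℝ) (hL : 0 ≤ L) (hl : l < k) (hk : k < n) :
    cf n L k l * (hmom n L (2*l+1) : ℂ) = cf n L k (l+1) * (hmom n L (2*l+2) : ℂ) := by
  have hln : (l : ℝ) + 2 ≤ n := by exact_mod_cast (by omega : l + 2 ≤ n)
  have key : -(Real.Gamma (l - n + 1/2) / Real.Gamma (l + L + 1)) * hmom n L (2*l+1) =
      (Real.Gamma ((l+1 : ℕ) - n + 1/2) / Real.Gamma ((l+1 : ℕ) + L + 1)) * hmom n L (2*l+2) := by
    have g1 : Real.Gamma ((l+1 : ℕ) - n + 1/2) = (l - n + 1/2) * Real.Gamma (l - n + 1/2) := by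
      rw [← Real.Gamma_add_one (by simpa using half_ne l n 0)]
      congr 1
      push_cast
      ring
    have g2 : Real.Gamma ((l+1 : ℕ) + L + 1) = (l + L + 1) * Real.Gamma (l + L + 1) := by
      rw [← Real.Gamma_add_one (by positivity)]
      congr 1
      push_cast
      ring
    have g3 : Real.Gamma ((2*l+2 : ℕ) + 2*L + 1) =
        (2*l+2*L+2) * Real.Gamma ((2*l+1 : ℕ) + 2*L + 1) := by
      rw [show ((2*l+1 : ℕ) + 2*L + 1 : ℝ) = 2*l+2*L+2 by push_cast; ring,
        ← Real.Gamma_add_one (by positivity)]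
      congr 1
      push_cast
      ring
    have g4 : Real.Gamma (2*n - (2*l+1 : ℕ) + 1) =
        (2*n-2*l-1) * Real.Gamma (2*n - (2*l+2 : ℕ) + 1) := by
      rw [show (2*n - (2*l+2 : ℕ) + 1 : ℝ) = 2*n-2*l-1 by push_cast; ring,
        ← Real.Gamma_add_one (by linarith)]
      congr 1
      push_cast
      ring
    have h2 : Real.Gamma (l + L + 1 : ℝ) ≠ 0 := (Real.Gamma_pos_of_pos (by positivity)).ne'
    have h3 : (l + L + 1 : ℝ) ≠ 0 := by positivity
    have h4 : Real.Gamma (2 * n + 2 * L + 2 : ℝ) ≠ 0 :=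
      (Real.Gamma_pos_of_pos (by positivity)).ne'
    unfold hmom
    rw [g1, g2, g3, g4]
    generalize Real.Gamma (l - n + 1/2) = A
    generalize Real.Gamma ((2*l+1 : ℕ) + 2*L + 1) = B
    generalize Real.Gamma (2*n - (2*l+2 : ℕ) + 1) = C
    field_simp
    ring
  have hs : (-1:ℂ)^(k-l) = -(-1:ℂ)^(k-(l+1)) := by
    rw [show k - l = (k - (l+1)) + 1 by omega, pow_succ]
    ring
  have keyC : -(((Real.Gamma (l - n + 1/2) : ℝ) : ℂ) / ((Real.Gamma (l + L + 1) : ℝ) : ℂ)) *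
      (hmom n L (2*l+1) : ℂ) =
      (((Real.Gamma ((l+1 : ℕ) - n + 1/2) : ℝ) : ℂ) /
        ((Real.Gamma ((l+1 : ℕ) + L + 1) : ℝ) : ℂ)) * (hmom n L (2*l+2) : ℂ) := by
    exact_mod_cast key
  unfold cf
  rw [hs]
  simp only [Complex.Gamma_ofReal]
  linear_combination (((Real.Gamma (k+L+1) : ℝ) : ℂ) / ((Real.Gamma (k-n+1/2) : ℝ) : ℂ)) *
    (-1:ℂ)^(k-(l+1)) * keyC

/-- Lemma 3.1 and equation (3.8): skew-orthogonality of the spherical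
skew-orthogonal polynomials. -/
theorem skew_orthogonality (N n : ℕ) (L : ℝ) (hN : 1 ≤ N) (hn : N ≤ n) (hL : 0 ≤ L)
    (k l : ℕ) (hk : k ≤ N-1) (hl : l ≤ N-1) :
    skewForm n L (qeven n L k) (qeven n L l) = 0 ∧
    skewForm n L (qodd k) (qodd l) = 0 ∧
    skewForm n L (qeven n L k) (qodd l) =
      (if k = l then
        2 * Complex.Gamma ((2*k+2*L+2 : ℝ) : ℂ) * Complex.Gamma ((2*(n:ℝ)-2*k : ℝ) : ℂ) /
          Complex.Gamma ((2*(n:ℝ)+2*L+2 : ℝ) : ℂ)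
      else 0) := by
  have hkn : k < n := by omega
  have hln : l < n := by omega
  refine ⟨?_, ?_, ?_⟩
  · rw [qeven_eq, qeven_eq, skew_sum n L hL _ _ _ _ _ _
      (fun i hi => by have := mem_range.1 hi; omega)
      (fun i hi => by have := mem_range.1 hi; omega)]
    refine sum_eq_zero fun i _ => sum_eq_zero fun j _ => ?_
    rw [if_neg (by omega), if_neg (by omega)]
    ring
  · rw [qodd_eq, qodd_eq, skew_sum n L hL _ _ _ _ _ _
      (fun i hi => by have := mem_singleton.1 hi; omega)
      (fun i hi => by have := mem_singleton.1 hi; omega)]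
    refine sum_eq_zero fun i _ => sum_eq_zero fun j _ => ?_
    rw [if_neg (by omega), if_neg (by omega)]
    ring
  · rw [qeven_eq, qodd_eq, skew_sum n L hL _ _ _ _ _ _
      (fun i hi => by have := mem_range.1 hi; omega)
      (fun i hi => by have := mem_singleton.1 hi; omega)]
    have e : ∀ i ∈ range (k+1), ∑ j ∈ ({l} : Finset ℕ), cf n L k i * (fun _ => (1:ℂ)) j *
        (2 * (if 2 * i + 1 = 2 * j + 1 then (hmom n L (2 * j + 1) : ℂ) else 0) -
         2 * (if 2 * i = 2 * j + 1 + 1 then (hmom n L (2 * i) : ℂ) else 0)) =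
        (if i = l then 2 * (cf n L k l * hmom n L (2*l+1)) else 0) -
        (if i = l + 1 then 2 * (cf n L k (l+1) * hmom n L (2*l+2)) else 0) := by
      intro i _
      rw [sum_singleton]
      rcases eq_or_ne i l with h | h
      · subst h
        rw [if_pos rfl, if_neg (by omega), if_pos rfl, if_neg (by omega)]
        ring
      · rcases eq_or_ne i (l+1) with h2 | h2
        · subst h2
          rw [if_neg (by omega), if_pos (by omega), if_neg (by omega), if_pos rfl,
            show 2 * (l + 1) = 2 * l + 2 by ring]
          ring
        · rw [if_neg (by omega), if_neg (by omega), if_neg h, if_neg h2]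
          ring
    rw [sum_congr rfl e, sum_sub_distrib, sum_ite_eq', sum_ite_eq']
    simp only [mem_range]
    rcases lt_trichotomy k l with h | h | h
    · rw [if_neg (by omega), if_neg (by omega), if_neg (by omega), sub_zero]
    · subst h
      rw [if_pos (by omega), if_neg (by omega), if_pos rfl, cf_self n k L hL, hmom,
        Complex.Gamma_ofReal, Complex.Gamma_ofReal, Complex.Gamma_ofReal,
        show ((2*k+1 : ℕ) + 2*L + 1 : ℝ) = 2*k+2*L+2 by push_cast; ring,
        show (2*(n:ℝ) - (2*k+1 : ℕ) + 1 : ℝ) = 2*n-2*k by push_cast; ring]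
      push_cast
      ring
    · rw [if_pos (by omega), if_pos (by omega), if_neg (by omega), cf_rec n k l L hL h hkn, sub_self]

end SI
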